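/- In the block matrix setup, assume additionally that T₁ is tridiagonal ((T₁)_{ij} = 0 for |i−j| > 1) with positive subdiagonal entries (T₁)_{i+1,i} > 0 for i = 1,…,m−1, and let μ be a positive Borel measure on [0,∞) with ∫_{[0,∞)} 1/(1+t) dμ(t) < ∞. Define f₂(z) := ∫_{[0,∞)} (ε(t) / (β d(t))) · 1/(z+t) dμ(t) for z > 0. Then (−1)^{m} f₂ is a Stieltjes function: there exists a positive Borel measure ν on [0,∞) with ∫_{[0,∞)} 1/(1+t) dν(t) < ∞ such that (−1)^{m} f₂(z) = ∫_{[0,∞)} 1/(z+t) dν(t) for all z > 0. In particular, f₂ has constant sign on (0,∞) and |f₂| is monotonically decreasing on (0,∞). -/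

import Mathlib

open MeasureTheory Matrix

/-- The bottom-left entry of the adjugate of an upper Hessenberg matrix. -/
theorem adjugate_last_zero_of_hessenberg {R : Type*} [CommRing R] {n : ℕ}
    (A : Matrix (Fin (n + 1)) (Fin (n + 1)) R)
    (hA : ∀ i j : Fin (n + 1), (j : ℕ) + 1 < (i : ℕ) → A i j = 0) :
    A.adjugate (Fin.last n) 0 = (-1) ^ n * ∏ i : Fin n, A i.succ i.castSucc := by
  have htri : (A.submatrix Fin.succ Fin.castSucc).IsUpperTriangular := by
    intro i j hij
    exact hA _ _ (by simpa using hij)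
  rw [adjugate_fin_succ_eq_det_submatrix]
  simp only [Fin.succAbove_zero, Fin.succAbove_last, det_of_isUpperTriangular htri]
  simp

/-- The determinant of a block matrix whose off-diagonal blocks are a single entry in transposed
positions. -/
theorem det_fromBlocks_single {R m n : Type*} [CommRing R] [Fintype m] [DecidableEq m]
    [Fintype n] [DecidableEq n] (A : Matrix m m R) (D : Matrix n n R)
    (hA : IsUnit A.det) (hD : IsUnit D.det) (i : m) (j : n) (b : R) :
    (fromBlocks A (single i j b) (single j i b) D).det =
      A.det * D.det * (1 - b ^ 2 * (A⁻¹ i i * D⁻¹ j j)) := by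
  let := A.invertibleOfIsUnitDet hA
  have hsub : D - single j i b * ⅟A * single i j b =
      D + single j () (-(b * A⁻¹ i i * b)) * single () j (1 : R) := by
    rw [invOf_eq_nonsing_inv, single_mul_mul_single, single_mul_single_same, mul_one,
      sub_eq_add_neg, ← single_neg]
  rw [det_fromBlocks₁₁, hsub, det_add_mul _ _ hD, single_mul_mul_single, det_unique (n := Unit)]
  simp
  ring

/-- A quotient of polynomials is bounded above on `[0, ∞)` when the denominator has no zero there
and at least the degree of the numerator. -/
theorem exists_eval_div_eval_le (p q : Polynomial ℝ) (hdeg : p.degree ≤ q.degree)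
    (hq : ∀ t : ℝ, 0 ≤ t → q.eval t ≠ 0) :
    ∃ C : ℝ, ∀ t : ℝ, 0 ≤ t → p.eval t / q.eval t ≤ C := by
  obtain ⟨c, hc⟩ := (Polynomial.isBigO_atTop_of_degree_le p q hdeg).bound
  obtain ⟨r, hr⟩ := Filter.eventually_atTop.1 hc
  have hcont : ContinuousOn (fun t => p.eval t / q.eval t) (Set.Icc 0 r) :=
    p.continuous.continuousOn.div q.continuous.continuousOn fun t ht => hq t ht.1
  obtain ⟨b, hb⟩ := isCompact_Icc.bddAbove_image hcont
  refine ⟨max b c, fun t ht => ?_⟩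
  rcases le_total t r with htr | hrt
  · exact (hb ⟨t, ⟨ht, htr⟩, rfl⟩).trans (le_max_left _ _)
  · refine le_trans (le_abs_self _) (le_trans ?_ (le_max_right _ _))
    rw [abs_div, div_le_iff₀ (abs_pos.2 (hq t ht))]
    exact hr t hrt

theorem integrableOn_inv_add {μ : Measure ℝ}
    (hμ : IntegrableOn (fun t => (1 + t)⁻¹) (Set.Ici 0) μ) {z : ℝ} (hz : 0 < z) :
    IntegrableOn (fun t => (z + t)⁻¹) (Set.Ici 0) μ := by
  refine Integrable.mono' (hμ.const_mul (max 1 z⁻¹)) (by fun_prop) ?_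
  filter_upwards [ae_restrict_mem measurableSet_Ici] with t ht
  have ht : 0 ≤ t := ht
  have hzt : 0 < z + t := by linarith
  have h1t : 0 < 1 + t := by linarith
  rw [Real.norm_of_nonneg (inv_nonneg.2 hzt.le), ← div_eq_mul_inv, le_div_iff₀ h1t,
    ← div_eq_inv_mul, div_le_iff₀ hzt, mul_add]
  refine add_le_add ?_ (le_mul_of_one_le_left ht (le_max_left _ _))
  rw [← inv_mul_cancel₀ hz.ne']
  exact mul_le_mul_of_nonneg_right (le_max_right _ _) hz.le

theorem integrableOn_mul_inv_add {μ : Measure ℝ}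
    (hμ : IntegrableOn (fun t => (1 + t)⁻¹) (Set.Ici 0) μ) {w : ℝ → ℝ} (hw : Measurable w)
    {C : ℝ} (hw0 : ∀ t, 0 ≤ t → 0 ≤ w t) (hwC : ∀ t, 0 ≤ t → w t ≤ C) {z : ℝ} (hz : 0 < z) :
    IntegrableOn (fun t => w t * (z + t)⁻¹) (Set.Ici 0) μ := by
  refine Integrable.bdd_mul (c := C) (integrableOn_inv_add hμ hz) hw.aestronglyMeasurable ?_
  filter_upwards [ae_restrict_mem measurableSet_Ici] with t ht
  rw [Real.norm_of_nonneg (hw0 t ht)]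
  exact hwC t ht

/-- Weighting the representing measure of a Stieltjes function by a bounded nonnegative density
gives a Stieltjes function. -/
theorem exists_stieltjes_measure_of_density {μ : Measure ℝ}
    (hμ : IntegrableOn (fun t => (1 + t)⁻¹) (Set.Ici 0) μ) {w : ℝ → ℝ} (hw : Measurable w)
    {C : ℝ} (hw0 : ∀ t, 0 ≤ t → 0 ≤ w t) (hwC : ∀ t, 0 ≤ t → w t ≤ C) :
    ∃ ν : Measure ℝ, IntegrableOn (fun t => (1 + t)⁻¹) (Set.Ici 0) ν ∧
      ∀ z : ℝ, 0 < z →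
        ∫ t in Set.Ici (0 : ℝ), w t * (z + t)⁻¹ ∂μ = ∫ t in Set.Ici (0 : ℝ), (z + t)⁻¹ ∂ν := by
  have hwm : Measurable fun t => ENNReal.ofReal (w t) := hw.ennreal_ofReal
  refine ⟨μ.withDensity fun t => ENNReal.ofReal (w t), ?_, fun z hz => ?_⟩
  · rw [IntegrableOn, restrict_withDensity measurableSet_Ici,
      integrable_withDensity_iff_integrable_smul' hwm (by simp)]
    refine (integrableOn_mul_inv_add hμ hw hw0 hwC one_pos).congr_fun (fun t ht => ?_)
      measurableSet_Ici
    simp [ENNReal.toReal_ofReal (hw0 t ht)]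
  · rw [setIntegral_withDensity_eq_setIntegral_toReal_smul hwm (by simp) _ measurableSet_Ici]
    refine setIntegral_congr_fun measurableSet_Ici fun t ht => ?_
    simp [ENNReal.toReal_ofReal (hw0 t ht)]

theorem integral_inv_add_nonneg (ν : Measure ℝ) {z : ℝ} (hz : 0 < z) :
    0 ≤ ∫ t in Set.Ici (0 : ℝ), (z + t)⁻¹ ∂ν :=
  setIntegral_nonneg measurableSet_Ici fun _ ht => inv_nonneg.2 (add_nonneg hz.le ht)

theorem integral_inv_add_anti {ν : Measure ℝ}
    (hν : IntegrableOn (fun t => (1 + t)⁻¹) (Set.Ici 0) ν) {x y : ℝ} (hx : 0 < x) (hxy : x ≤ y) :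
    ∫ t in Set.Ici (0 : ℝ), (y + t)⁻¹ ∂ν ≤ ∫ t in Set.Ici (0 : ℝ), (x + t)⁻¹ ∂ν := by
  refine setIntegral_mono_on (integrableOn_inv_add hν (hx.trans_le hxy))
    (integrableOn_inv_add hν hx) measurableSet_Ici fun t ht => ?_
  have ht : 0 ≤ t := ht
  exact inv_anti₀ (by linarith) (by linarith)

theorem posDef_add_smul_one {n : Type*} [Fintype n] [DecidableEq n] {A : Matrix n n ℝ}
    (hA : A.PosDef) {t : ℝ} (ht : 0 ≤ t) : (A + t • 1).PosDef :=
  hA.add_posSemidef (PosSemidef.one.smul ht)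

theorem eval_charpoly_neg {R n : Type*} [CommRing R] [Fintype n] [DecidableEq n]
    (A : Matrix n n R) (t : R) : (-A).charpoly.eval t = (A + t • 1).det := by
  rw [eval_charpoly, sub_neg_eq_add, add_comm, smul_one_eq_diagonal, scalar_apply]

/-- **Lemma 3.4 (first part)**: in the block matrix setup
`T = [[T₁, β e_m e₁ᵀ], [β e₁ e_mᵀ, S]]` with `T` positive definite and `T₁` tridiagonal
with positive subdiagonal entries, and for a positive Borel measure `μ` on `[0,∞)` with
`∫ 1/(1+t) dμ(t) < ∞`, the function
`f₂(z) = ∫ (ε(t)/(β d(t))) · 1/(z+t) dμ(t)` is such that `(−1)^m f₂` is a Stieltjes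
function; in particular `f₂` has constant sign on `(0,∞)` and `|f₂|` is monotonically
decreasing on `(0,∞)`. -/
theorem f2_sign_flip_stieltjes
    {m k : ℕ} (hm : 1 ≤ m) (hk : 1 ≤ k)
    (T₁ : Matrix (Fin m) (Fin m) ℝ) (S : Matrix (Fin k) (Fin k) ℝ)
    (hT₁ : T₁.IsSymm) (hS : S.IsSymm)
    (htri : ∀ i j : Fin m, ((i : ℕ) + 1 < (j : ℕ) ∨ (j : ℕ) + 1 < (i : ℕ)) → T₁ i j = 0)
    (hsub : ∀ i : Fin (m - 1),
      0 < T₁ ⟨(i : ℕ) + 1, by have := i.isLt; omega⟩ ⟨(i : ℕ), by have := i.isLt; omega⟩)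
    (β : ℝ) (hβ : 0 < β)
    (T : Matrix (Fin m ⊕ Fin k) (Fin m ⊕ Fin k) ℝ)
    (hT : T = Matrix.fromBlocks T₁
      (Matrix.of fun i j => if i = (⟨m - 1, by omega⟩ : Fin m) ∧ j = (⟨0, hk⟩ : Fin k) then β else 0)
      (Matrix.of fun i j => if i = (⟨0, hk⟩ : Fin k) ∧ j = (⟨m - 1, by omega⟩ : Fin m) then β else 0)
      S)
    (hTpd : T.PosDef)
    (γ δ ε d : ℝ → ℝ)
    (hγ : ∀ t, γ t = (T₁ + t • 1)⁻¹ ⟨m - 1, by omega⟩ ⟨m - 1, by omega⟩)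
    (hδ : ∀ t, δ t = (S + t • 1)⁻¹ ⟨0, hk⟩ ⟨0, hk⟩)
    (hε : ∀ t, ε t = (T₁ + t • 1)⁻¹ ⟨m - 1, by omega⟩ ⟨0, hm⟩)
    (hd : ∀ t, d t = γ t * δ t - 1 / β ^ 2)
    (μ : Measure ℝ)
    (hμ : MeasureTheory.IntegrableOn (fun t => (1 + t)⁻¹) (Set.Ici 0) μ)
    (f₂ : ℝ → ℝ)
    (hf₂ : ∀ z : ℝ, 0 < z →
      f₂ z = ∫ t in Set.Ici (0 : ℝ), (ε t / (β * d t)) * (z + t)⁻¹ ∂μ) :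
    (∃ ν : Measure ℝ,
      MeasureTheory.IntegrableOn (fun t => (1 + t)⁻¹) (Set.Ici 0) ν ∧
      ∀ z : ℝ, 0 < z →
        (-1 : ℝ) ^ m * f₂ z = ∫ t in Set.Ici (0 : ℝ), (z + t)⁻¹ ∂ν) ∧
    ((∀ z : ℝ, 0 < z → 0 ≤ f₂ z) ∨ (∀ z : ℝ, 0 < z → f₂ z ≤ 0)) ∧
    (∀ z₁ z₂ : ℝ, 0 < z₁ → z₁ ≤ z₂ → |f₂ z₂| ≤ |f₂ z₁|) := by
  obtain ⟨n, rfl⟩ : ∃ n, m = n + 1 := ⟨m - 1, by omega⟩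
  set P : ℝ := ∏ i : Fin n, T₁ i.succ i.castSucc with hPdef
  have hP : 0 < P := Finset.prod_pos fun i _ => hsub i
  have hT₁pd : T₁.PosDef := (hT ▸ hTpd).submatrix Sum.inl_injective
  have hSpd : S.PosDef := (hT ▸ hTpd).submatrix Sum.inr_injective
  set p : Polynomial ℝ := (-S).charpoly with hp
  set q : Polynomial ℝ := (-T).charpoly with hq
  have hppos : ∀ t : ℝ, 0 ≤ t → 0 < p.eval t := fun t ht => by
    rw [hp, eval_charpoly_neg]
    exact (posDef_add_smul_one hSpd ht).det_pos
  have hqpos : ∀ t : ℝ, 0 ≤ t → 0 < q.eval t := fun t ht => by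
    rw [hq, eval_charpoly_neg]
    exact (posDef_add_smul_one hTpd ht).det_pos
  obtain ⟨C, hC⟩ := exists_eval_div_eval_le p q
    (by simp only [hp, hq, charpoly_degree_eq_dim]; exact_mod_cast (by simp)) fun t ht => (hqpos t ht).ne'
  have hweight : ∀ t : ℝ, 0 ≤ t →
      ε t / (β * d t) = (-1) ^ (n + 1) * (β * P * (p.eval t / q.eval t)) := fun t ht => by
    have hA := (posDef_add_smul_one hT₁pd ht).det_pos
    have hD := (posDef_add_smul_one hSpd ht).det_pos
    have hadj : (T₁ + t • 1).adjugate (Fin.last n) 0 = (-1) ^ n * P := by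
      rw [adjugate_last_zero_of_hessenberg]
      · simp [hPdef, one_apply_ne, (Fin.castSucc_lt_succ).ne']
      · intro i j hij
        have hne : i ≠ j := by rintro rfl; omega
        simp [htri i j (Or.inr hij), one_apply_ne hne]
    have hεt : ε t = (-1) ^ n * P / (T₁ + t • 1).det := by
      rw [hε, inv_def, Ring.inverse_eq_inv', Matrix.smul_apply, smul_eq_mul]
      exact (congrArg _ hadj).trans (inv_mul_eq_div _ _)
    have hblock : T + t • 1 = fromBlocks (T₁ + t • 1)
        (single (⟨n + 1 - 1, by omega⟩ : Fin (n + 1)) (⟨0, hk⟩ : Fin k) β)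
        (single (⟨0, hk⟩ : Fin k) (⟨n + 1 - 1, by omega⟩ : Fin (n + 1)) β) (S + t • 1) := by
      rw [hT, ← fromBlocks_one, fromBlocks_smul, fromBlocks_add]
      congr 1 <;> ext i j <;> simp [single_apply, eq_comm]
    have hqt : q.eval t =
        (T₁ + t • 1).det * (S + t • 1).det * (1 - β ^ 2 * (γ t * δ t)) := by
      rw [hq, eval_charpoly_neg, hblock, det_fromBlocks_single _ _ hA.ne'.isUnit hD.ne'.isUnit,
        hγ, hδ]
    have hne : 1 - β ^ 2 * (γ t * δ t) ≠ 0 := right_ne_zero_of_mul (hqt ▸ (hqpos t ht).ne')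
    have hdt : β * d t = -(1 - β ^ 2 * (γ t * δ t)) / β := by
      rw [hd]
      field_simp
      ring
    rw [hεt, hdt, hqt, hp, eval_charpoly_neg, pow_succ]
    generalize 1 - β ^ 2 * (γ t * δ t) = s at hne ⊢
    have hA' := hA.ne'
    have hD' := hD.ne'
    field_simp
    ring
  have hβP : 0 ≤ β * P := (mul_pos hβ hP).le
  obtain ⟨ν, hν, hνeq⟩ := exists_stieltjes_measure_of_density hμ
    (w := fun t => β * P * (p.eval t / q.eval t)) (by fun_prop) (C := β * P * C)
    (fun t ht => mul_nonneg hβP (div_pos (hppos t ht) (hqpos t ht)).le)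
    (fun t ht => mul_le_mul_of_nonneg_left (hC t ht) hβP)
  have hf : ∀ z : ℝ, 0 < z →
      f₂ z = (-1) ^ (n + 1) * ∫ t in Set.Ici (0 : ℝ), (z + t)⁻¹ ∂ν := fun z hz => by
    rw [hf₂ z hz, ← hνeq z hz, ← integral_const_mul]
    refine setIntegral_congr_fun measurableSet_Ici fun t ht => ?_
    simp only [hweight t ht, mul_assoc]
  refine ⟨⟨ν, hν, fun z hz => ?_⟩, ?_, fun x y hx hxy => ?_⟩
  · rw [hf z hz, ← mul_assoc, ← mul_pow]
    simp
  · rcases neg_one_pow_eq_or ℝ (n + 1) with h | h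
    · left
      intro z hz
      simpa [hf z hz, h] using integral_inv_add_nonneg ν hz
    · right
      intro z hz
      simpa [hf z hz, h] using integral_inv_add_nonneg ν hz
  · have hy := hx.trans_le hxy
    rw [hf x hx, hf y hy, abs_mul, abs_mul, abs_neg_one_pow, one_mul, one_mul,
      abs_of_nonneg (integral_inv_add_nonneg ν hx), abs_of_nonneg (integral_inv_add_nonneg ν hy)]
    exact integral_inv_add_anti hν hx hxy
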